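/- There exist constants c > 0 and ε₀ ∈ (0,1) such that the following holds for every ε ∈ (0,ε₀), every integer n ≥ 1/ε, and every positive integer N. Suppose there is a function A from length-N sequences of elements of {0,1,…,n} to vectors in [0,1]ⁿ such that, for every nondecreasing parameter vector p = (p_1 ≤ p_2 ≤ … ≤ p_n) ∈ [0,1]ⁿ, the probability over N i.i.d. samples X drawn from the n-PBD with parameters p that the nondecreasing rearrangement q of A(X) satisfies max_{1≤i≤n} |q_i − p_i| ≤ ε is at least 2/3. Then N ≥ 2^{c/ε}. -/

import Mathlib

/-!
The lower bound is Le Cam's two-point method applied to two Poisson binomial distributions that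
are exponentially close although one of their sorted parameters differs by `Ω(1/k)`.

For an angle `θ ∈ (0, π)` the equation `T_k(x) = cos θ` (`T_k` the Chebyshev polynomial) has `k`
simple roots `cos φ_i` in `(-1, 1)`. Take the parameters `(1 - cos φ_i) / 2` for `i < k` and
`1` for the remaining `n - k` coordinates. With `w = z - 1` and `y = 1 + 2 / w` the probability
generating function is
`z ^ (n - k) * (w / 2) ^ k * ∏ (y - cos φ_i) = z ^ (n - k) * (w / 2) ^ k * (T_k(y) - cos θ) / 2 ^ (k - 1)`,
so changing `θ` changes it only by a constant of size at most `4 / 4 ^ k` times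
`z ^ (n - k) * (z - 1) ^ k`. The coefficients of `(z - 1) ^ k` have absolute sum `2 ^ k`, hence the two pmfs
are at `ℓ¹` distance at most `4 / 2 ^ k` (`sum_abs_pbdPmf_sub_le`). On the other hand, the middle
parameter moves by at least `1 / (3 k)` between `θ = 1/2` and `θ = 2` (`chebParam_middle_gap`).

With `k ≈ 1 / (7 ε)` the two success events are disjoint, so the `N`-fold products are at `ℓ¹`
distance at least `1/3`; this distance is at most `N` times the one-sample distance
(`sum_abs_prod_sub_le`), whence `N ≥ 2 ^ k / 12`.
-/

open scoped Classical

/-- The pmf of the Poisson binomial distribution with parameter vector `p`. -/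
noncomputable def pbdPmf {ι : Type*} [Fintype ι] [DecidableEq ι] (p : ι → ℝ) (k : ℕ) : ℝ :=
  ∑ S ∈ Finset.univ.powerset.filter (fun S : Finset ι => S.card = k),
    (∏ i ∈ S, p i) * ∏ i ∈ Sᶜ, (1 - p i)

open Polynomial in
/-- The probability generating function of the Poisson binomial distribution, as a polynomial. -/
noncomputable def pbdGen {ι : Type*} [Fintype ι] (p : ι → ℝ) : ℝ[X] :=
  ∏ i, (C (p i) * X + C (1 - p i))

open Polynomial in
lemma pbdPmf_eq_coeff {ι : Type*} [Fintype ι] [DecidableEq ι] (p : ι → ℝ) (k : ℕ) :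
    pbdPmf p k = (pbdGen p).coeff k := by
  rw [pbdGen, Finset.prod_add, finsetSum_coeff, pbdPmf, Finset.sum_filter]
  refine Finset.sum_congr rfl fun S _ => ?_
  rw [Finset.prod_mul_distrib, Finset.prod_const, ← map_prod, ← map_prod, mul_right_comm, ← C_mul,
    coeff_C_mul_X_pow, Finset.compl_eq_univ_sdiff]
  simp only [eq_comm]

lemma pbdPmf_nonneg {ι : Type*} [Fintype ι] [DecidableEq ι] (p : ι → ℝ)
    (hp : ∀ i, p i ∈ Set.Icc (0 : ℝ) 1) (k : ℕ) : 0 ≤ pbdPmf p k :=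
  Finset.sum_nonneg fun _ _ => mul_nonneg (Finset.prod_nonneg fun i _ => (hp i).1)
    (Finset.prod_nonneg fun i _ => sub_nonneg.2 (hp i).2)

open Polynomial in
lemma sum_pbdPmf {n : ℕ} (p : Fin n → ℝ) :
    ∑ a : Fin (n + 1), pbdPmf p (a : ℕ) = 1 := by
  have hdeg : (pbdGen p).natDegree < n + 1 := by
    refine Nat.lt_succ_of_le ((natDegree_prod_le _ _).trans ?_)
    refine (Finset.sum_le_sum fun i _ => natDegree_linear_le).trans ?_
    simp
  have h := eval_eq_sum_range' hdeg (1 : ℝ)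
  rw [← Fin.sum_univ_eq_sum_range (fun i => (pbdGen p).coeff i * 1 ^ i)] at h
  simp only [one_pow, mul_one] at h
  simp only [pbdPmf_eq_coeff]
  rw [← h, pbdGen, eval_prod]
  simp

/-! ### Product measures -/

lemma sum_prod_eq_one {α : Type*} [Fintype α] (P : α → ℝ) (hP : ∑ a, P a = 1) (N : ℕ) :
    ∑ x : Fin N → α, ∏ i, P (x i) = 1 := by
  have h := Fintype.prod_sum (fun (_ : Fin N) (a : α) => P a)
  rw [← h]
  simp [hP]

/-- The `ℓ¹` distance between `N`-fold products is at most `N` times the `ℓ¹` distance of the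
factors. -/
lemma sum_abs_prod_sub_le {α : Type*} [Fintype α] (P Q : α → ℝ)
    (hP0 : ∀ a, 0 ≤ P a) (hQ0 : ∀ a, 0 ≤ Q a) (hP : ∑ a, P a = 1) (hQ : ∑ a, Q a = 1) (N : ℕ) :
    ∑ x : Fin N → α, |∏ i, P (x i) - ∏ i, Q (x i)| ≤ N * ∑ a, |P a - Q a| := by
  induction N with
  | zero => simp
  | succ N ih =>
    rw [← (Fin.consEquiv (fun _ : Fin (N + 1) => α)).sum_comp, Fintype.sum_prod_type]
    simp only [Fin.consEquiv_apply, Fin.prod_univ_succ, Fin.cons_zero, Fin.cons_succ]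
    have hstep : ∀ (a : α) (x : Fin N → α),
        |P a * ∏ i, P (x i) - Q a * ∏ i, Q (x i)| ≤
          |P a - Q a| * ∏ i, P (x i) + Q a * |∏ i, P (x i) - ∏ i, Q (x i)| := by
      intro a x
      have h1 : P a * ∏ i, P (x i) - Q a * ∏ i, Q (x i) =
          (P a - Q a) * ∏ i, P (x i) + Q a * (∏ i, P (x i) - ∏ i, Q (x i)) := by ring
      rw [h1]
      refine (abs_add_le _ _).trans (le_of_eq ?_)
      rw [abs_mul, abs_mul, abs_of_nonneg (Finset.prod_nonneg fun i _ => hP0 (x i)),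
        abs_of_nonneg (hQ0 a)]
    calc _ ≤ ∑ a, ∑ x : Fin N → α, (|P a - Q a| * ∏ i, P (x i) +
            Q a * |∏ i, P (x i) - ∏ i, Q (x i)|) :=
          Finset.sum_le_sum fun a _ => Finset.sum_le_sum fun x _ => hstep a x
      _ = ∑ a, |P a - Q a| + ∑ x : Fin N → α, |∏ i, P (x i) - ∏ i, Q (x i)| := by
          simp only [Finset.sum_add_distrib, ← Finset.mul_sum, sum_prod_eq_one P hP N, mul_one]
          rw [← Finset.sum_mul, hQ, one_mul]
      _ ≤ _ := by push_cast; linarith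

/-! ### The Chebyshev parameter vectors -/

/-- The `i`-th angle `φ ∈ [0, π]`, in increasing order, at which `cos (k φ) = cos θ`: the values
`k φ` are `θ, 2π - θ, 2π + θ, 4π - θ, …`. -/
noncomputable def chebAngle (θ : ℝ) (k i : ℕ) : ℝ :=
  (Real.pi * i + if Even i then θ else Real.pi - θ) / k

/-- The parameters: affine images in `[0, 1]` of the roots of `T_k(x) = cos θ`, in increasing
order, followed by ones. -/
noncomputable def chebParam (θ : ℝ) (k i : ℕ) : ℝ :=
  if i < k then (1 - Real.cos (chebAngle θ k i)) / 2 else 1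

section Angles

variable {θ : ℝ} {k : ℕ}

lemma chebAngle_strictMono (hθ : 0 < θ) (hθ' : θ < Real.pi) (hk : 0 < k) :
    StrictMono (chebAngle θ k) := by
  refine strictMono_nat_of_lt_succ fun i => ?_
  have hk' : (0 : ℝ) < k := by exact_mod_cast hk
  unfold chebAngle
  refine div_lt_div_of_pos_right ?_ hk'
  push_cast
  by_cases h : Even i
  · have h' : ¬ Even (i + 1) := by simpa [Nat.even_add_one] using h
    rw [if_pos h, if_neg h']
    linarith
  · have h' : Even (i + 1) := by simpa [Nat.even_add_one] using h
    rw [if_neg h, if_pos h']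
    linarith

lemma chebAngle_mem (hθ : 0 < θ) (hθ' : θ < Real.pi) {i : ℕ} (hi : i < k) :
    chebAngle θ k i ∈ Set.Icc 0 Real.pi := by
  have hk' : (0 : ℝ) < k := by exact_mod_cast (Nat.zero_le i).trans_lt hi
  have hi' : (i : ℝ) + 1 ≤ k := by exact_mod_cast hi
  have hi0 : (0 : ℝ) ≤ Real.pi * i := mul_nonneg Real.pi_pos.le (Nat.cast_nonneg i)
  have hmul := mul_le_mul_of_nonneg_left hi' Real.pi_pos.le
  unfold chebAngle
  constructor
  · refine div_nonneg ?_ hk'.le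
    split_ifs <;> linarith
  · rw [div_le_iff₀ hk']
    split_ifs <;> linarith

lemma cos_mul_chebAngle (hk : 0 < k) (i : ℕ) :
    Real.cos (k * chebAngle θ k i) = Real.cos θ := by
  have hk' : (k : ℝ) ≠ 0 := by exact_mod_cast hk.ne'
  unfold chebAngle
  rw [mul_div_cancel₀ _ hk']
  by_cases h : Even i
  · rw [if_pos h]
    obtain ⟨m, rfl⟩ := h
    rw [show Real.pi * ((m + m : ℕ) : ℝ) + θ = θ + (m : ℕ) * (2 * Real.pi) by push_cast; ring,
      Real.cos_add_nat_mul_two_pi]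
  · rw [if_neg h]
    obtain ⟨m, rfl⟩ := Nat.not_even_iff_odd.1 h
    rw [show Real.pi * ((2 * m + 1 : ℕ) : ℝ) + (Real.pi - θ) =
      -θ + ((m + 1 : ℕ) : ℝ) * (2 * Real.pi) by push_cast; ring,
      Real.cos_add_nat_mul_two_pi, Real.cos_neg]

lemma chebParam_mem (θ : ℝ) (k i : ℕ) : chebParam θ k i ∈ Set.Icc (0 : ℝ) 1 := by
  unfold chebParam
  have h1 := Real.neg_one_le_cos (chebAngle θ k i)
  have h2 := Real.cos_le_one (chebAngle θ k i)
  split_ifs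
  · constructor <;> linarith
  · simp

lemma chebParam_monotone (hθ : 0 < θ) (hθ' : θ < Real.pi) (hk : 0 < k) :
    Monotone (chebParam θ k) := by
  intro i j hij
  by_cases hj : j < k
  · have hi : i < k := hij.trans_lt hj
    have := Real.strictAntiOn_cos.antitoneOn (chebAngle_mem hθ hθ' hi) (chebAngle_mem hθ hθ' hj)
      ((chebAngle_strictMono hθ hθ' hk).monotone hij)
    simp only [chebParam, if_pos hi, if_pos hj]
    linarith
  · rw [show chebParam θ k j = 1 from if_neg hj]
    exact (chebParam_mem θ k i).2

open Polynomial in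
/-- The factorization of `T_k - cos θ`. -/
lemma chebyshev_sub_eq_prod (hθ : 0 < θ) (hθ' : θ < Real.pi) (hk : 0 < k) :
    Chebyshev.T ℝ k - C (Real.cos θ) =
      C (2 ^ (k - 1)) * ∏ i ∈ Finset.range k, (X - C (Real.cos (chebAngle θ k i))) := by
  have hdT : (Chebyshev.T ℝ k).degree = k := by simp
  have hlt : (C (Real.cos θ)).degree < (Chebyshev.T ℝ k).degree := by
    rw [hdT]
    exact degree_C_le.trans_lt (by exact_mod_cast hk)
  have hd : (Chebyshev.T ℝ k - C (Real.cos θ)).degree = k := by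
    rw [degree_sub_eq_left_of_degree_lt hlt, hdT]
  have h2 : (2 : ℝ) ^ (k - 1) ≠ 0 := by positivity
  refine eq_of_degree_le_of_eval_index_eq (Finset.range k)
    (v := fun i => Real.cos (chebAngle θ k i)) ?_ ?_ ?_ ?_ ?_
  · intro i hi j hj hij
    simp only [Finset.coe_range, Set.mem_Iio] at hi hj
    exact (chebAngle_strictMono hθ hθ' hk).injective (Real.injOn_cos (chebAngle_mem hθ hθ' hi)
      (chebAngle_mem hθ hθ' hj) hij)
  · rw [hd, Finset.card_range]
  · rw [hd, degree_C_mul h2, degree_prod]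
    simp
  · rw [leadingCoeff_sub_of_degree_lt hlt, leadingCoeff_mul, leadingCoeff_prod]
    simp
  · intro i hi
    rw [eval_mul, eval_prod, Finset.prod_eq_zero hi (by simp)]
    have := Chebyshev.T_real_cos (chebAngle θ k i) (k : ℤ)
    rw [eval_sub, this]
    simp [cos_mul_chebAngle hk]

open Polynomial in
/-- The generating function at `1 + w`, with `w ≠ 0`; the only dependence on `θ` is through
the additive term `cos θ`. -/
lemma eval_pbdGen_chebParam (hθ : 0 < θ) (hθ' : θ < Real.pi) (hk : 0 < k) (a : ℕ) (w : ℝ)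
    (hw : w ≠ 0) :
    (pbdGen (fun i : Fin (k + a) => chebParam θ k i)).eval (1 + w) =
      (w / 2) ^ k * (((Chebyshev.T ℝ k).eval (1 + 2 / w) - Real.cos θ) / 2 ^ (k - 1)) *
        (1 + w) ^ a := by
  have h := congrArg (eval (1 + 2 / w)) (chebyshev_sub_eq_prod hθ hθ' hk)
  rw [eval_sub, eval_C, eval_mul, eval_C, eval_prod] at h
  rw [h, mul_div_cancel_left₀ _ (by positivity), pbdGen, eval_prod,
    Fin.prod_univ_eq_prod_range
      (fun i => eval (1 + w) (C (chebParam θ k i) * X + C (1 - chebParam θ k i))),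
    Finset.prod_range_add]
  congr 1
  · have hconst : (w / 2) ^ k = ∏ _i ∈ Finset.range k, w / 2 := by
      rw [Finset.prod_const, Finset.card_range]
    rw [hconst, ← Finset.prod_mul_distrib]
    refine Finset.prod_congr rfl fun i hi => ?_
    have hi' : i < k := Finset.mem_range.1 hi
    simp only [chebParam, if_pos hi', eval_add, eval_mul, eval_C, eval_X, eval_sub]
    field_simp
    ring
  · simp [chebParam]

open Polynomial in
lemma pbdGen_chebParam_sub {θ' : ℝ} (hθ : 0 < θ) (hθp : θ < Real.pi) (hθ' : 0 < θ')
    (hθp' : θ' < Real.pi) (hk : 0 < k) (a : ℕ) :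
    pbdGen (fun i : Fin (k + a) => chebParam θ k i) -
        pbdGen (fun i : Fin (k + a) => chebParam θ' k i) =
      C ((Real.cos θ' - Real.cos θ) / (2 ^ k * 2 ^ (k - 1))) * (X ^ a * (X + C (-1)) ^ k) := by
  refine Polynomial.funext fun z => ?_
  obtain ⟨w, rfl⟩ : ∃ w, z = 1 + w := ⟨z - 1, by ring⟩
  rw [eval_sub]
  by_cases hw : w = 0
  · subst hw
    simp [pbdGen, eval_prod, hk.ne']
  · rw [eval_pbdGen_chebParam hθ hθp hk a w hw, eval_pbdGen_chebParam hθ' hθp' hk a w hw]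
    simp only [eval_mul, eval_C, eval_pow, eval_add, eval_X]
    rw [show 1 + w + -1 = w by ring, div_pow]
    field_simp
    ring

/-- The two Poisson binomial distributions are exponentially close in `ℓ¹`. -/
lemma sum_abs_pbdPmf_sub_le {θ' : ℝ} (hθ : 0 < θ) (hθp : θ < Real.pi) (hθ' : 0 < θ')
    (hθp' : θ' < Real.pi) (hk : 0 < k) (a : ℕ) :
    ∑ j : Fin (k + a + 1), |pbdPmf (fun i : Fin (k + a) => chebParam θ k i) (j : ℕ) -
        pbdPmf (fun i : Fin (k + a) => chebParam θ' k i) (j : ℕ)| ≤ 4 / 2 ^ k := by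
  simp only [pbdPmf_eq_coeff, ← Polynomial.coeff_sub]
  rw [pbdGen_chebParam_sub hθ hθp hθ' hθp' hk a]
  simp only [Polynomial.coeff_C_mul, abs_mul]
  have hsum := Fin.sum_univ_eq_sum_range (fun j : ℕ =>
    |(Polynomial.X ^ a * (Polynomial.X + Polynomial.C (-1 : ℝ)) ^ k).coeff j|) (k + a + 1)
  rw [← Finset.mul_sum, hsum,
    show k + a + 1 = a + (k + 1) by ring, Finset.sum_range_add]
  have h0 : ∑ j ∈ Finset.range a,
      |(Polynomial.X ^ a * (Polynomial.X + Polynomial.C (-1 : ℝ)) ^ k).coeff j| = 0 := by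
    refine Finset.sum_eq_zero fun j hj => ?_
    rw [Polynomial.coeff_X_pow_mul', if_neg (by simpa using hj), abs_zero]
  have h1 : ∑ j ∈ Finset.range (k + 1),
      |(Polynomial.X ^ a * (Polynomial.X + Polynomial.C (-1 : ℝ)) ^ k).coeff (a + j)| =
        2 ^ k := by
    have : ((∑ j ∈ Finset.range (k + 1), k.choose j : ℕ) : ℝ) = 2 ^ k := by
      rw [Nat.sum_range_choose]; simp
    rw [← this, Nat.cast_sum]
    refine Finset.sum_congr rfl fun j _ => ?_
    rw [add_comm a j, Polynomial.coeff_X_pow_mul, Polynomial.coeff_X_add_C_pow]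
    simp [abs_mul]
  rw [h0, h1, zero_add, abs_div, abs_of_pos (by positivity : (0 : ℝ) < 2 ^ k * 2 ^ (k - 1))]
  have hc : |Real.cos θ' - Real.cos θ| ≤ 2 := by
    rw [abs_le]
    constructor <;> linarith [Real.neg_one_le_cos θ, Real.cos_le_one θ, Real.neg_one_le_cos θ',
      Real.cos_le_one θ']
  have hk2 : (2 : ℝ) ^ k = 2 * 2 ^ (k - 1) := by
    rw [← pow_succ', Nat.sub_add_cancel hk]
  rw [hk2, div_mul_eq_mul_div, div_le_div_iff₀ (by positivity) (by positivity)]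
  have h2 : (0 : ℝ) < 2 ^ (k - 1) := by positivity
  nlinarith [mul_le_mul_of_nonneg_right hc (by positivity : (0 : ℝ) ≤ 2 ^ (k - 1) * 2 ^ (k - 1))]

end Angles

lemma chebParam_middle (θ : ℝ) {m : ℕ} (hm : 0 < m) :
    chebParam θ (4 * m) (2 * m) = (1 + Real.sin (θ / (4 * m))) / 2 := by
  have hm' : (m : ℝ) ≠ 0 := by exact_mod_cast hm.ne'
  rw [chebParam, if_pos (by omega), chebAngle, if_pos (even_two_mul m)]
  have : (Real.pi * ((2 * m : ℕ) : ℝ) + θ) / ((4 * m : ℕ) : ℝ) =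
      θ / (4 * m) + Real.pi / 2 := by
    push_cast
    field_simp
    ring
  rw [this, Real.cos_add_pi_div_two]
  ring

/-- The gap between the middle parameters for `k = 4 m` is at least `1 / (3 k)`. -/
lemma chebParam_middle_gap {m : ℕ} (hm : 0 < m) :
    1 / (12 * m : ℝ) ≤ chebParam 2 (4 * m) (2 * m) - chebParam (1 / 2) (4 * m) (2 * m) := by
  have hm' : (1 : ℝ) ≤ m := by exact_mod_cast hm
  have hpi := Real.pi_gt_three
  have hpi' := Real.pi_lt_d2
  rw [chebParam_middle _ hm, chebParam_middle _ hm]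
  have h1 : Real.sin (1 / 2 / (4 * m)) ≤ 1 / 2 / (4 * m) := Real.sin_le (by positivity)
  have h2 : 2 / Real.pi * (2 / (4 * m)) ≤ Real.sin (2 / (4 * m)) := by
    refine Real.mul_le_sin (by positivity) ?_
    rw [div_le_iff₀ (by positivity)]
    nlinarith
  have h3 : (5 / 4 : ℝ) / (4 * m) ≤ 2 / Real.pi * (2 / (4 * m)) := by
    rw [← mul_div_assoc]
    refine div_le_div_of_nonneg_right ?_ (by positivity)
    rw [div_mul_eq_mul_div, le_div_iff₀ Real.pi_pos]
    linarith
  have h4 : (5 / 4 : ℝ) / (4 * m) - 1 / 2 / (4 * m) = 9 / 4 * (1 / (12 * m)) := by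
    field_simp
    norm_num
  have h5 : 0 < 1 / (12 * m : ℝ) := by positivity
  linarith

/-- Sample complexity lower bound for parameter estimation of PBDs: any algorithm that
estimates all parameters to additive error ε with probability 2/3 needs 2^{Ω(1/ε)} samples. -/
theorem parameter_estimation_lower_bound :
    ∃ c ε₀ : ℝ, 0 < c ∧ 0 < ε₀ ∧ ε₀ < 1 ∧
      ∀ ε : ℝ, 0 < ε → ε < ε₀ →
        ∀ n : ℕ, 1 / ε ≤ (n : ℝ) →
          ∀ N : ℕ, 0 < N →
            ∀ A : (Fin N → Fin (n + 1)) → (Fin n → ℝ),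
              (∀ x i, A x i ∈ Set.Icc (0 : ℝ) 1) →
              (∀ p : Fin n → ℝ, Monotone p → (∀ i, p i ∈ Set.Icc (0 : ℝ) 1) →
                (2 : ℝ) / 3 ≤
                  ∑ x ∈ Finset.univ.filter
                      (fun x : Fin N → Fin (n + 1) =>
                        ∃ π : Equiv.Perm (Fin n), Monotone (A x ∘ π) ∧
                          ∀ i, |(A x ∘ π) i - p i| ≤ ε),
                    ∏ i, pbdPmf p ((x i : ℕ))) →
              (2 : ℝ) ^ (c / ε) ≤ (N : ℝ) := by
  refine ⟨1 / 28, 1 / 56, by norm_num, by norm_num, by norm_num, ?_⟩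
  intro ε hε hε' n hn N hN A hA hsucc
  set m : ℕ := ⌊1 / (28 * ε)⌋₊ with hm
  have h2 : 2 ≤ m := by
    refine Nat.le_floor ?_
    rw [le_div_iff₀ (by positivity)]
    push_cast
    linarith
  have hm0 : 0 < m := by omega
  have hmle : (m : ℝ) ≤ 1 / (28 * ε) := Nat.floor_le (by positivity)
  have hmge : 1 / (28 * ε) ≤ (m : ℝ) + 1 := (Nat.lt_floor_add_one _).le
  have h28 : 1 / (28 * ε) = 1 / ε / 28 := by rw [div_div, mul_comm]
  have hinv : 0 < 1 / ε := by positivity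
  obtain ⟨a, rfl⟩ : ∃ a, n = 4 * m + a := by
    refine Nat.exists_eq_add_of_le ?_
    have : ((4 * m : ℕ) : ℝ) ≤ n := by
      push_cast
      linarith
    exact_mod_cast this
  have hpi := Real.pi_gt_three
  have hk : 0 < 4 * m := by omega
  set p : Fin (4 * m + a) → ℝ := fun i => chebParam (1 / 2) (4 * m) i with hp
  set q : Fin (4 * m + a) → ℝ := fun i => chebParam 2 (4 * m) i with hq
  have hpI : ∀ i, p i ∈ Set.Icc (0 : ℝ) 1 := fun i => chebParam_mem _ _ _
  have hqI : ∀ i, q i ∈ Set.Icc (0 : ℝ) 1 := fun i => chebParam_mem _ _ _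
  have hpm : Monotone p := fun i j hij =>
    chebParam_monotone (by norm_num) (by linarith) hk hij
  have hqm : Monotone q := fun i j hij =>
    chebParam_monotone (by norm_num) (by linarith) hk hij
  have hp' := hsucc p hpm hpI
  have hq' := hsucc q hqm hqI
  set E := Finset.univ.filter (fun x : Fin N → Fin (4 * m + a + 1) =>
    ∃ π : Equiv.Perm (Fin (4 * m + a)), Monotone (A x ∘ π) ∧
      ∀ i, |(A x ∘ π) i - p i| ≤ ε) with hE
  set F := Finset.univ.filter (fun x : Fin N → Fin (4 * m + a + 1) =>
    ∃ π : Equiv.Perm (Fin (4 * m + a)), Monotone (A x ∘ π) ∧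
      ∀ i, |(A x ∘ π) i - q i| ≤ ε) with hF
  -- The gap `1 / (12 m) ≥ 7 ε / 3` exceeds `2 ε`, so no output is good for both vectors.
  have hsub : F ⊆ Eᶜ := by
    intro x hx
    rw [Finset.mem_compl]
    intro hxp
    obtain ⟨π, hπ, h1⟩ := (Finset.mem_filter.1 hxp).2
    obtain ⟨σ, hσ, h3⟩ := (Finset.mem_filter.1 hx).2
    have hunique := Tuple.unique_monotone hπ hσ
    have e1 := h1 ⟨2 * m, by omega⟩
    have e2 := h3 ⟨2 * m, by omega⟩
    rw [← hunique] at e2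
    have hgap := chebParam_middle_gap hm0
    have hlow : 7 / 3 * ε ≤ 1 / (12 * m : ℝ) := by
      rw [le_div_iff₀ (by positivity)]
      rw [le_div_iff₀ (by positivity)] at hmle
      nlinarith
    have e3 := (abs_le.1 e1).1
    have e4 := (abs_le.1 e2).2
    have e5 := (abs_le.1 e1).2
    have e6 := (abs_le.1 e2).1
    simp only [hp, hq] at e3 e4 e5 e6
    linarith
  have hP0 := fun j : Fin (4 * m + a + 1) => pbdPmf_nonneg p hpI (j : ℕ)
  have hQ0 := fun j : Fin (4 * m + a + 1) => pbdPmf_nonneg q hqI (j : ℕ)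
  have htv := sum_abs_prod_sub_le (fun j : Fin (4 * m + a + 1) => pbdPmf p (j : ℕ))
    (fun j => pbdPmf q (j : ℕ)) hP0 hQ0 (sum_pbdPmf p) (sum_pbdPmf q) N
  have hone := sum_prod_eq_one (fun j : Fin (4 * m + a + 1) => pbdPmf q (j : ℕ))
    (sum_pbdPmf q) N
  have hclose := sum_abs_pbdPmf_sub_le (θ := 1 / 2) (θ' := 2) (k := 4 * m) (by norm_num)
    (by linarith) (by norm_num) (by linarith) hk a
  have hFle : ∑ x ∈ F, ∏ i, pbdPmf q ((x i : ℕ)) ≤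
      ∑ x ∈ Eᶜ, ∏ i, pbdPmf q ((x i : ℕ)) :=
    Finset.sum_le_sum_of_subset_of_nonneg hsub fun x _ _ =>
      Finset.prod_nonneg fun i _ => hQ0 (x i)
  rw [← Finset.sum_add_sum_compl E] at hone
  have hdiff : ∑ x ∈ E, ∏ i, pbdPmf p ((x i : ℕ)) - ∑ x ∈ E, ∏ i, pbdPmf q ((x i : ℕ)) ≤
      ∑ x : Fin N → Fin (4 * m + a + 1),
        |∏ i, pbdPmf p ((x i : ℕ)) - ∏ i, pbdPmf q ((x i : ℕ))| := by
    rw [← Finset.sum_sub_distrib]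
    refine (Finset.sum_le_sum fun x _ => le_abs_self _).trans ?_
    exact Finset.sum_le_sum_of_subset_of_nonneg (Finset.subset_univ _) fun x _ _ => abs_nonneg _
  have hNpos : (0 : ℝ) < N := by exact_mod_cast hN
  have hfin : 1 / 3 ≤ (N : ℝ) * (4 / 2 ^ (4 * m)) := by
    have := mul_le_mul_of_nonneg_left hclose hNpos.le
    linarith
  have hN12 : (2 : ℝ) ^ (4 * m) ≤ 12 * N := by
    rw [← mul_div_assoc, le_div_iff₀ (by positivity)] at hfin
    linarith
  -- Since `m ≥ 2`, the factor `12 ≤ 2 ^ 4` costs at most half of the exponent.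
  have hpow : (2 : ℝ) ^ (4 * m) = 16 * 2 ^ (4 * (m - 1)) := by
    rw [show 4 * m = 4 + 4 * (m - 1) by omega, pow_add]
    norm_num
  have hexp : 1 / 28 / ε ≤ ((4 * (m - 1) : ℕ) : ℝ) := by
    have h2' : (2 : ℝ) ≤ m := by exact_mod_cast h2
    rw [Nat.cast_mul, Nat.cast_sub hm0, div_div]
    push_cast
    linarith
  calc (2 : ℝ) ^ (1 / 28 / ε) ≤ (2 : ℝ) ^ (((4 * (m - 1) : ℕ) : ℝ)) :=
        Real.rpow_le_rpow_of_exponent_le (by norm_num) hexp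
    _ = 2 ^ (4 * (m - 1)) := Real.rpow_natCast _ _
    _ ≤ N := by
        have : (0 : ℝ) < 2 ^ (4 * (m - 1)) := by positivity
        linarith
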